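/- For all p > 1 and q > 1 with 1/p + 1/q > 1, there exists a constant C_{p,q} > 0, depending only on p and q, such that: for every a < b, all functions f, g : [a;b] → ℝ with no common points of discontinuity, with f of finite p-variation and g of finite q-variation on [a;b], and every ξ ∈ [a;b], one has |∫_a^b f dg − f(ξ)·(g(b) − g(a))| ≤ 2·C_{p,q} · ‖f‖_{p-var,[a;b]} · ‖g‖_{q-var,[a;b]} · min{ ‖f‖_{osc,[a;b]}^{1 + p/q − p} / ‖f‖_{p-var,[a;b]}^{1 + p/q − p} , ‖g‖_{osc,[a;b]}^{1 + q/p − q} / ‖g‖_{q-var,[a;b]}^{1 + q/p − q} }, where ∫_a^b f dg denotes the Riemann–Stieltjes integral (which exists under these hypotheses). -/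

import Mathlib

/-!
Following Young, remove the points of a partition one at a time: taking out the middle one of three
consecutive points changes the left sum by the product of an increment of `f` and the next increment
of `g`. Among `k + 1` such products, one consists of increments that are typical for both functions,
and a typical increment of `f` is at most both the oscillation of `f` and
`(2 * V / (k + 1)) ^ (1 / p)` with `V` the `p`-variation. Using the oscillation for `k` below about
`V / osc ^ p`, and the `p`-variation beyond, bounds the sum of the products by the
oscillation-improved quantity.

These estimates hold uniformly over finite sets of points, so by compactness there is an additive
interval function `J v - J u` satisfying them on every subinterval. Since one of `f`, `g` oscillates
little on each short interval, the errors on the cells of a fine partition are small compared with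
the increments of the superadditive variations, and `J b - J a` is the Riemann–Stieltjes integral.
-/

open Filter Set

/-- Truncated variation of `f` on `[a;b]` with truncation parameter `δ`. -/
noncomputable def truncVar (f : ℝ → ℝ) (δ a b : ℝ) : ENNReal :=
  ⨆ (n : ℕ) (t : Fin (n + 1) → ℝ) (_ : StrictMono t)
    (_ : ∀ i, t i ∈ Set.Icc a b),
    ∑ i : Fin n, ENNReal.ofReal (|f (t i.succ) - f (t i.castSucc)| - δ)

/-- p-variation of `f` on `[a;b]`. -/
noncomputable def pVar (f : ℝ → ℝ) (p a b : ℝ) : ENNReal :=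
  ⨆ (n : ℕ) (t : Fin (n + 1) → ℝ) (_ : StrictMono t)
    (_ : ∀ i, t i ∈ Set.Icc a b),
    ∑ i : Fin n, ENNReal.ofReal (|f (t i.succ) - f (t i.castSucc)| ^ p)

/-- The p-variation norm `(V^p(f,[a;b]))^{1/p}`. -/
noncomputable def pVarNorm (f : ℝ → ℝ) (p a b : ℝ) : ℝ :=
  (pVar f p a b).toReal ^ (1 / p)

/-- Oscillation norm `sup_{a ≤ s < t ≤ b} |f t - f s|`. -/
noncomputable def oscNorm (f : ℝ → ℝ) (a b : ℝ) : ℝ :=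
  sSup {x | ∃ s ∈ Set.Icc a b, ∃ t ∈ Set.Icc a b, s < t ∧ x = |f t - f s|}

/-- Sup norm `sup_{a ≤ t ≤ b} |f t|`. -/
noncomputable def supNorm (f : ℝ → ℝ) (a b : ℝ) : ℝ :=
  sSup {x | ∃ t ∈ Set.Icc a b, x = |f t|}

/-- `I` is the Riemann–Stieltjes integral `∫_a^b f dg`. -/
def RSIntegral (f g : ℝ → ℝ) (a b : ℝ) (I : ℝ) : Prop :=
  ∀ ε > (0 : ℝ), ∃ δ > (0 : ℝ), ∀ (n : ℕ) (t : Fin (n + 1) → ℝ) (ξ : Fin n → ℝ),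
    StrictMono t → t 0 = a → t (Fin.last n) = b →
    (∀ i : Fin n, t i.castSucc ≤ ξ i ∧ ξ i ≤ t i.succ) →
    (∀ i : Fin n, t i.succ - t i.castSucc < δ) →
    |∑ i : Fin n, f (ξ i) * (g (t i.succ) - g (t i.castSucc)) - I| < ε

/-- `f` is regulated on `[a;b]`: all the relevant one-sided limits exist and are finite. -/
def Regulated (f : ℝ → ℝ) (a b : ℝ) : Prop :=
  (∃ L : ℝ, Tendsto f (nhdsWithin a (Set.Ioi a)) (nhds L)) ∧
  (∃ L : ℝ, Tendsto f (nhdsWithin b (Set.Iio b)) (nhds L)) ∧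
  ∀ x ∈ Set.Ioo a b,
    (∃ L : ℝ, Tendsto f (nhdsWithin x (Set.Iio x)) (nhds L)) ∧
    (∃ L : ℝ, Tendsto f (nhdsWithin x (Set.Ioi x)) (nhds L))

/-- `f` and `g` have no common points of discontinuity on `[a;b]`. -/
def NoCommonDiscont (f g : ℝ → ℝ) (a b : ℝ) : Prop :=
  ∀ x ∈ Set.Icc a b,
    ContinuousWithinAt f (Set.Icc a b) x ∨ ContinuousWithinAt g (Set.Icc a b) x

section PVar

variable {f : ℝ → ℝ} {p a b u v w : ℝ} {m n : ℕ}

/-- The sum `Σ |f(tᵢ₊₁) - f(tᵢ)|^p` along a finite sequence of points, as it occurs in `pVar`. -/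
noncomputable def varSum (f : ℝ → ℝ) (p : ℝ) (t : Fin (n + 1) → ℝ) : ENNReal :=
  ∑ i : Fin n, ENNReal.ofReal (|f (t i.succ) - f (t i.castSucc)| ^ p)

lemma varSum_vecCons (y : ℝ) (t : Fin (n + 1) → ℝ) :
    varSum f p (Matrix.vecCons y t) = ENNReal.ofReal (|f (t 0) - f y| ^ p) + varSum f p t := by
  simp only [varSum, Fin.sum_univ_succ, Matrix.cons_val_succ, Fin.castSucc_zero,
    Matrix.cons_val_zero, ← Fin.succ_castSucc]

lemma varSum_le_pVar {t : Fin (n + 1) → ℝ} (ht : StrictMono t) (ha : a ≤ t 0)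
    (hb : t (Fin.last n) ≤ b) : varSum f p t ≤ pVar f p a b :=
  le_iSup₂_of_le n t <| le_iSup₂_of_le ht
    (fun i ↦ ⟨ha.trans (ht.monotone (Fin.zero_le i)), (ht.monotone (Fin.le_last i)).trans hb⟩)
    le_rfl

lemma exists_varSum_gt {c : ENNReal} (h : c < pVar f p a b) :
    ∃ (n : ℕ) (t : Fin (n + 1) → ℝ), StrictMono t ∧ a ≤ t 0 ∧ t (Fin.last n) ≤ b ∧
      c < varSum f p t := by
  simp only [pVar, lt_iSup_iff] at h
  obtain ⟨n, t, ht, hI, hc⟩ := h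
  exact ⟨n, t, ht, (hI 0).1, (hI (Fin.last n)).2, hc⟩

lemma pVar_mono (ha : a ≤ u) (hb : v ≤ b) : pVar f p u v ≤ pVar f p a b :=
  iSup₂_mono fun _ _ ↦ iSup_mono fun _ ↦ iSup_mono' fun hI ↦
    ⟨fun i ↦ ⟨ha.trans (hI i).1, (hI i).2.trans hb⟩, le_rfl⟩

lemma exists_strictMono_cons (hp : 0 < p) {t : Fin (n + 1) → ℝ} (ht : StrictMono t) {y : ℝ}
    (hy : y ≤ t 0) :
    ∃ (k : ℕ) (s : Fin (k + 1) → ℝ), StrictMono s ∧ s 0 = y ∧ s (Fin.last k) = t (Fin.last n) ∧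
      ENNReal.ofReal (|f (t 0) - f y| ^ p) + varSum f p t ≤ varSum f p s := by
  rcases hy.eq_or_lt with rfl | hlt
  · exact ⟨n, t, ht, rfl, rfl, by simp [Real.zero_rpow hp.ne']⟩
  · exact ⟨n + 1, Matrix.vecCons y t, ht.vecCons hlt, rfl, rfl, (varSum_vecCons y t).ge⟩

lemma exists_strictMono_append (hp : 0 < p) {s : Fin (m + 1) → ℝ} (hs : StrictMono s)
    {t : Fin (n + 1) → ℝ} (ht : StrictMono t) (hts : t (Fin.last n) ≤ s 0) :
    ∃ (k : ℕ) (r : Fin (k + 1) → ℝ), StrictMono r ∧ r 0 = t 0 ∧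
      r (Fin.last k) = s (Fin.last m) ∧ varSum f p t + varSum f p s ≤ varSum f p r := by
  induction n with
  | zero =>
    obtain ⟨k, r, hr, hr0, hrl, hsum⟩ := exists_strictMono_cons (f := f) hp hs hts
    exact ⟨k, r, hr, hr0, hrl, by simpa [varSum] using le_add_self.trans hsum⟩
  | succ n ih =>
    obtain ⟨j, r, hr, hr0, hrl, hsum⟩ :=
      ih (t := Matrix.vecTail t) (ht.comp (Fin.strictMono_succ)) hts
    obtain ⟨k, r', hr', hr0', hrl', hsum'⟩ := exists_strictMono_cons (f := f) (y := t 0) hp hr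
      (hr0 ▸ ht.monotone (Fin.zero_le _))
    refine ⟨k, r', hr', hr0', hrl'.trans hrl, le_trans ?_ hsum'⟩
    calc varSum f p t + varSum f p s
        = ENNReal.ofReal (|f (Matrix.vecTail t 0) - f (t 0)| ^ p) +
            (varSum f p (Matrix.vecTail t) + varSum f p s) := by
          rw [← add_assoc, ← varSum_vecCons]
          congr 2
          exact (Matrix.cons_head_tail t).symm
      _ ≤ ENNReal.ofReal (|f (r 0) - f (t 0)| ^ p) + varSum f p r := by rw [hr0]; gcongr

lemma pVar_add_le (hp : 0 < p) (huw : u ≤ w) (hwv : w ≤ v) :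
    pVar f p u w + pVar f p w v ≤ pVar f p u v := by
  rcases eq_or_ne (pVar f p u w) 0 with h₁ | h₁
  · simpa [h₁] using pVar_mono huw le_rfl
  rcases eq_or_ne (pVar f p w v) 0 with h₂ | h₂
  · simpa [h₂] using pVar_mono le_rfl hwv
  refine le_of_forall_lt fun c hc ↦ ?_
  obtain ⟨c₁, hc₁, c₂, hc₂, hsum⟩ := ENNReal.exists_lt_add_of_lt_add hc h₁ h₂
  obtain ⟨m, t, ht, htu, htw, hct⟩ := exists_varSum_gt hc₁
  obtain ⟨n, s, hs, hsw, hsv, hcs⟩ := exists_varSum_gt hc₂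
  obtain ⟨k, r, hr, hr₀, hr₁, hts⟩ := exists_strictMono_append (f := f) hp hs ht (htw.trans hsw)
  calc c < c₁ + c₂ := hsum
    _ ≤ varSum f p t + varSum f p s := add_le_add hct.le hcs.le
    _ ≤ varSum f p r := hts
    _ ≤ pVar f p u v := varSum_le_pVar hr (htu.trans_eq hr₀.symm) (hr₁.trans_le hsv)

lemma ofReal_abs_sub_rpow_le_pVar (hp : 0 < p) (huv : u ≤ v) :
    ENNReal.ofReal (|f v - f u| ^ p) ≤ pVar f p u v := by
  rcases huv.eq_or_lt with rfl | hlt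
  · simp [Real.zero_rpow hp.ne']
  · simpa [varSum] using varSum_le_pVar (f := f) (p := p) (t := ![u, v]) (by simpa) le_rfl le_rfl

lemma sum_pVar_le (hp : 0 < p) {x : ℕ → ℝ} (hx : Monotone x) (n : ℕ) :
    ∑ i ∈ Finset.range n, pVar f p (x i) (x (i + 1)) ≤ pVar f p (x 0) (x n) := by
  induction n with
  | zero => simp
  | succ n ih =>
    rw [Finset.sum_range_succ]
    exact (add_le_add_left ih _).trans (pVar_add_le hp (hx n.zero_le) (hx n.le_succ))

lemma pVarNorm_nonneg : 0 ≤ pVarNorm f p a b := Real.rpow_nonneg ENNReal.toReal_nonneg _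

lemma pVarNorm_rpow (hp : p ≠ 0) : pVarNorm f p a b ^ p = (pVar f p a b).toReal := by
  rw [pVarNorm, one_div, Real.rpow_inv_rpow ENNReal.toReal_nonneg hp]

lemma sum_abs_sub_rpow_le (hp : 0 < p) {x : ℕ → ℝ} (hx : Monotone x) (hu : u ≤ x 0)
    (hv : x n ≤ v) (hfin : pVar f p u v ≠ ⊤) :
    ∑ i ∈ Finset.range n, |f (x (i + 1)) - f (x i)| ^ p ≤ pVarNorm f p u v ^ p := by
  rw [pVarNorm_rpow hp.ne', ← ENNReal.ofReal_le_iff_le_toReal hfin,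
    ENNReal.ofReal_sum_of_nonneg fun _ _ ↦ by positivity]
  calc ∑ i ∈ Finset.range n, ENNReal.ofReal (|f (x (i + 1)) - f (x i)| ^ p)
      ≤ ∑ i ∈ Finset.range n, pVar f p (x i) (x (i + 1)) :=
        Finset.sum_le_sum fun i _ ↦ ofReal_abs_sub_rpow_le_pVar hp (hx i.le_succ)
    _ ≤ pVar f p (x 0) (x n) := sum_pVar_le hp hx n
    _ ≤ pVar f p u v := pVar_mono hu hv

lemma toReal_pVar_le_sub (hp : 0 < p) (hau : a ≤ u) (huv : u ≤ v) (hvb : v ≤ b)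
    (hfin : pVar f p a b ≠ ⊤) :
    (pVar f p u v).toReal ≤ (pVar f p a v).toReal - (pVar f p a u).toReal := by
  have fin_of_le {c d : ℝ} (hc : a ≤ c) (hd : d ≤ b) : pVar f p c d ≠ ⊤ :=
    ne_top_of_le_ne_top hfin (pVar_mono hc hd)
  rw [le_sub_iff_add_le', ← ENNReal.toReal_add (fin_of_le le_rfl (huv.trans hvb))
    (fin_of_le hau hvb)]
  exact ENNReal.toReal_mono (fin_of_le le_rfl hvb) (pVar_add_le hp hau huv)

lemma abs_sub_le_pVarNorm (hp : 0 < p) (hfin : pVar f p a b ≠ ⊤) {y z : ℝ} (hy : y ∈ Icc a b)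
    (hz : z ∈ Icc a b) : |f y - f z| ≤ pVarNorm f p a b := by
  wlog hzy : z ≤ y generalizing y z
  · rw [abs_sub_comm]; exact this hz hy (le_of_not_ge hzy)
  rw [← Real.rpow_le_rpow_iff (abs_nonneg _) pVarNorm_nonneg hp, pVarNorm_rpow hp.ne',
    ← ENNReal.ofReal_le_iff_le_toReal hfin]
  exact (ofReal_abs_sub_rpow_le_pVar hp hzy).trans (pVar_mono hz.1 hy.2)

lemma oscNorm_nonneg : 0 ≤ oscNorm f a b :=
  Real.sSup_nonneg <| by rintro _ ⟨s, -, t, -, -, rfl⟩; exact abs_nonneg _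

lemma oscNorm_le {η : ℝ} (hη : 0 ≤ η) (h : ∀ y ∈ Icc a b, ∀ z ∈ Icc a b, |f y - f z| ≤ η) :
    oscNorm f a b ≤ η :=
  Real.sSup_le (by rintro _ ⟨s, hs, t, ht, -, rfl⟩; exact h t ht s hs) hη

lemma oscNorm_le_pVarNorm (hp : 0 < p) (hfin : pVar f p a b ≠ ⊤) :
    oscNorm f a b ≤ pVarNorm f p a b :=
  oscNorm_le pVarNorm_nonneg fun _ hy _ hz ↦ abs_sub_le_pVarNorm hp hfin hy hz

lemma abs_sub_le_oscNorm (hp : 0 < p) (hfin : pVar f p a b ≠ ⊤) {y z : ℝ} (hy : y ∈ Icc a b)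
    (hz : z ∈ Icc a b) : |f y - f z| ≤ oscNorm f a b := by
  wlog hzy : z ≤ y generalizing y z
  · rw [abs_sub_comm]; exact this hz hy (le_of_not_ge hzy)
  rcases hzy.eq_or_lt with rfl | hlt
  · simpa using oscNorm_nonneg
  · refine le_csSup ⟨pVarNorm f p a b, ?_⟩ ⟨z, hz, y, hy, hlt, rfl⟩
    rintro _ ⟨s, hs, t, ht, -, rfl⟩
    exact abs_sub_le_pVarNorm hp hfin ht hs

end PVar

section PowerSums

variable {s α ρ T : ℝ} {m n : ℕ}

lemma sum_Ico_rpow_neg_le (hs₀ : 0 ≤ s) (hs₁ : s ≠ 1) (hm : 1 ≤ m) (hmn : m ≤ n) :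
    ∑ k ∈ Finset.Ico m n, ((k : ℝ) + 1) ^ (-s) ≤
      ((n : ℝ) ^ (1 - s) - (m : ℝ) ^ (1 - s)) / (1 - s) := by
  have hm₀ : (0 : ℝ) < m := by exact_mod_cast hm
  have hmn' : (m : ℝ) ≤ n := by exact_mod_cast hmn
  have anti : AntitoneOn (fun x : ℝ ↦ x ^ (-s)) (Icc m n) := fun x hx y _ hxy ↦
    Real.rpow_le_rpow_of_nonpos (hm₀.trans_le hx.1) hxy (neg_nonpos.2 hs₀)
  calc ∑ k ∈ Finset.Ico m n, ((k : ℝ) + 1) ^ (-s)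
      ≤ ∫ x in (m : ℝ)..n, x ^ (-s) := by simpa using anti.sum_le_integral_Ico hmn
    _ = ((n : ℝ) ^ (1 - s) - (m : ℝ) ^ (1 - s)) / (1 - s) := by
      rw [integral_rpow (Or.inr ⟨by simpa using hs₁, notMem_uIcc_of_lt hm₀ (hm₀.trans_le hmn')⟩),
        neg_add_eq_sub]

lemma sum_range_rpow_neg_le (hα₀ : 0 ≤ α) (hα₁ : α < 1) (n : ℕ) :
    ∑ k ∈ Finset.range n, ((k : ℝ) + 1) ^ (-α) ≤ (n : ℝ) ^ (1 - α) / (1 - α) := by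
  have hα : 0 < 1 - α := sub_pos.2 hα₁
  rcases n.eq_zero_or_pos with rfl | hn
  · simp [Real.zero_rpow hα.ne']
  rw [← Finset.sum_range_add_sum_Ico _ hn, Finset.sum_range_one]
  have tail := sum_Ico_rpow_neg_le hα₀ hα₁.ne le_rfl hn
  have head : 1 ≤ 1 / (1 - α) := (one_le_div hα).2 (by linarith)
  simp only [Nat.cast_zero, zero_add, Nat.cast_one, Real.one_rpow, sub_div] at tail ⊢
  linarith

lemma sum_Ico_rpow_neg_le_of_one_lt (hs : 1 < s) (hm : 1 ≤ m) (n : ℕ) :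
    ∑ k ∈ Finset.Ico m n, ((k : ℝ) + 1) ^ (-s) ≤ (m : ℝ) ^ (1 - s) / (s - 1) := by
  have : 0 < s - 1 := sub_pos.2 hs
  rcases le_total n m with h | h
  · rw [Finset.Ico_eq_empty_of_le h, Finset.sum_empty]
    positivity
  refine (sum_Ico_rpow_neg_le (by linarith) hs.ne' hm h).trans ?_
  rw [← neg_div_neg_eq, neg_sub, neg_sub]
  gcongr
  linarith [Real.rpow_nonneg n.cast_nonneg (1 - s)]

lemma sum_Ico_rpow_neg_mul_min_le (hαρ : 1 < α + ρ) (hT : 0 < T) (hm : 1 ≤ m) (hTm : T ≤ m)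
    (n : ℕ) :
    ∑ k ∈ Finset.Ico m n, ((k : ℝ) + 1) ^ (-α) * min 1 ((T / (k + 1)) ^ ρ) ≤
      1 / (α + ρ - 1) * T ^ (1 - α) := by
  have : 0 < α + ρ - 1 := sub_pos.2 hαρ
  calc _ ≤ ∑ k ∈ Finset.Ico m n, T ^ ρ * ((k : ℝ) + 1) ^ (-(α + ρ)) := by
        refine Finset.sum_le_sum fun k _ ↦
          (mul_le_mul_of_nonneg_left (min_le_right _ _) (by positivity)).trans_eq ?_
        have hk : (0 : ℝ) < k + 1 := by positivity
        rw [Real.div_rpow hT.le hk.le, neg_add, Real.rpow_add hk, Real.rpow_neg hk.le ρ]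
        ring
    _ ≤ T ^ ρ * ((m : ℝ) ^ (1 - (α + ρ)) / (α + ρ - 1)) := by
        rw [← Finset.mul_sum]
        gcongr
        exact sum_Ico_rpow_neg_le_of_one_lt hαρ hm n
    _ ≤ T ^ ρ * (T ^ (1 - (α + ρ)) / (α + ρ - 1)) := by
        gcongr T ^ ρ * (?_ / _)
        exact Real.rpow_le_rpow_of_nonpos hT hTm (by linarith)
    _ = 1 / (α + ρ - 1) * T ^ (1 - α) := by
        rw [← mul_div_assoc, ← Real.rpow_add hT]
        ring_nf

lemma sum_rpow_neg_mul_min_le (hα₀ : 0 ≤ α) (hα₁ : α < 1) (hαρ : 1 < α + ρ) (hT : 1 ≤ T)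
    (n : ℕ) :
    ∑ k ∈ Finset.range n, ((k : ℝ) + 1) ^ (-α) * min 1 ((T / (k + 1)) ^ ρ) ≤
      (2 / (1 - α) + 1 / (α + ρ - 1)) * T ^ (1 - α) := by
  have hT₀ : 0 < T := one_pos.trans_le hT
  have : 0 < 1 - α := sub_pos.2 hα₁
  set N := ⌈T⌉₊
  have hTN : T ≤ N := Nat.le_ceil T
  have hN : 1 ≤ N := Nat.one_le_cast.1 (hT.trans hTN)
  have hNT : (N : ℝ) ≤ 2 * T := by linarith [Nat.ceil_lt_add_one hT₀.le]
  have head : ∑ k ∈ Finset.range N, ((k : ℝ) + 1) ^ (-α) * min 1 ((T / (k + 1)) ^ ρ) ≤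
      2 / (1 - α) * T ^ (1 - α) :=
    calc _ ≤ ∑ k ∈ Finset.range N, ((k : ℝ) + 1) ^ (-α) :=
          Finset.sum_le_sum fun k _ ↦ mul_le_of_le_one_right (by positivity) (min_le_left _ _)
      _ ≤ (2 * T) ^ (1 - α) / (1 - α) := (sum_range_rpow_neg_le hα₀ hα₁ N).trans (by gcongr)
      _ ≤ 2 * T ^ (1 - α) / (1 - α) := by
          rw [Real.mul_rpow two_pos.le hT₀.le]
          gcongr
          exact Real.rpow_le_self_of_one_le one_le_two (by linarith)
      _ = 2 / (1 - α) * T ^ (1 - α) := by ring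
  calc ∑ k ∈ Finset.range n, ((k : ℝ) + 1) ^ (-α) * min 1 ((T / (k + 1)) ^ ρ)
      ≤ ∑ k ∈ Finset.range (max n N), ((k : ℝ) + 1) ^ (-α) * min 1 ((T / (k + 1)) ^ ρ) :=
        Finset.sum_le_sum_of_subset_of_nonneg (Finset.range_mono (le_max_left n N))
          fun _ _ _ ↦ by positivity
    _ ≤ _ := by
        rw [← Finset.sum_range_add_sum_Ico _ (le_max_right n N), add_mul]
        exact add_le_add head (sum_Ico_rpow_neg_mul_min_le hαρ hT₀ hN hTN _)

end PowerSums

section DiscreteYoungLoeve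

variable {f g : ℝ → ℝ} {p q u v ξ : ℝ} {x : ℕ → ℝ} {j k m n : ℕ}

/-- The Riemann–Stieltjes sum of `f` against `g` along `x 0, …, x n` with left-endpoint tags. -/
def leftSum (f g : ℝ → ℝ) (x : ℕ → ℝ) (n : ℕ) : ℝ :=
  ∑ i ∈ Finset.range n, f (x i) * (g (x (i + 1)) - g (x i))

/-- The increasing enumeration of the natural numbers other than `j + 1`. -/
def skipSucc (j k : ℕ) : ℕ := if k ≤ j then k else k + 1

lemma monotone_skipSucc (j : ℕ) : Monotone (skipSucc j) := by
  intro k l hkl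
  grind [skipSucc]

lemma leftSum_eq_leftSum_comp_skipSucc (f g : ℝ → ℝ) (x : ℕ → ℝ) (hjm : j ≤ m) :
    leftSum f g x (m + 2) = leftSum f g (x ∘ skipSucc j) (m + 1) +
      (f (x (j + 1)) - f (x j)) * (g (x (j + 2)) - g (x (j + 1))) := by
  induction m, hjm using Nat.le_induction with
  | base =>
    have head : ∑ i ∈ Finset.range j, f (x i) * (g (x (i + 1)) - g (x i)) =
        ∑ i ∈ Finset.range j,
          f (x (skipSucc j i)) * (g (x (skipSucc j (i + 1))) - g (x (skipSucc j i))) :=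
      Finset.sum_congr rfl fun i hi ↦ by grind [skipSucc]
    simp only [leftSum, Finset.sum_range_succ, Function.comp_apply, ← head]
    simp only [skipSucc, le_refl, if_true, Nat.not_succ_le_self, if_false]
    ring
  | succ m hjm ih =>
    have hm : skipSucc j (m + 1) = m + 2 := if_neg (by lia)
    have hm' : skipSucc j (m + 2) = m + 3 := if_neg (by lia)
    have step := Finset.sum_range_succ
      (fun i ↦ f (x i) * (g (x (i + 1)) - g (x i))) (m + 2)
    have step' := Finset.sum_range_succ (fun i ↦ f ((x ∘ skipSucc j) i) *
      (g ((x ∘ skipSucc j) (i + 1)) - g ((x ∘ skipSucc j) i))) (m + 1)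
    simp only [Function.comp_apply, hm, hm'] at step'
    simp only [leftSum, Function.comp_apply] at ih ⊢
    rw [step, step', ih]
    ring

lemma abs_leftSum_sub_le_sum {c : ℕ → ℝ}
    (hc : ∀ (k : ℕ) (y : ℕ → ℝ), Monotone y → y 0 = u → y (k + 2) = v →
      ∃ i ≤ k, |f (y (i + 1)) - f (y i)| * |g (y (i + 2)) - g (y (i + 1))| ≤ c k)
    (hx : Monotone x) (hu : x 0 = u) (hv : x (n + 1) = v) :
    |leftSum f g x (n + 1) - f u * (g v - g u)| ≤ ∑ k ∈ Finset.range n, c k := by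
  induction n generalizing x with
  | zero => simp [leftSum, hu, ← hv]
  | succ n ih =>
    obtain ⟨j, hjn, hj⟩ := hc n x hx hu hv
    have ih' := ih (hx.comp (monotone_skipSucc j)) (by simpa [skipSucc] using hu)
      (by simpa [skipSucc, (Nat.lt_succ_of_le hjn).not_ge] using hv)
    rw [← abs_mul] at hj
    rw [leftSum_eq_leftSum_comp_skipSucc f g x hjn, Finset.sum_range_succ, add_sub_right_comm]
    exact (abs_add_le _ _).trans (add_le_add ih' hj)

lemma exists_le_and_le_of_sum_le {ι : Type*} {s : Finset ι} (hs : s.Nonempty) {A B : ι → ℝ}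
    {V W : ℝ} (hA : ∀ i ∈ s, 0 ≤ A i) (hB : ∀ i ∈ s, 0 ≤ B i) (hV : ∑ i ∈ s, A i ≤ V)
    (hW : ∑ i ∈ s, B i ≤ W) : ∃ i ∈ s, A i ≤ V * (2 / s.card) ∧ B i ≤ W * (2 / s.card) := by
  have hV₀ := (Finset.sum_nonneg hA).trans hV
  have hW₀ := (Finset.sum_nonneg hB).trans hW
  have avg : ∑ i ∈ s, (A i / V + B i / W) ≤ ∑ _i ∈ s, (2 / s.card : ℝ) := by
    rw [Finset.sum_add_distrib, ← Finset.sum_div, ← Finset.sum_div, Finset.sum_const, nsmul_eq_mul,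
      mul_div_cancel₀ _ (by exact_mod_cast hs.card_ne_zero)]
    linarith [div_le_one_of_le₀ hV hV₀, div_le_one_of_le₀ hW hW₀]
  obtain ⟨i, hi, hle⟩ := Finset.exists_le_of_sum_le hs avg
  have bound {D : ι → ℝ} {U : ℝ} (hD : ∀ i ∈ s, 0 ≤ D i) (hU : ∑ i ∈ s, D i ≤ U)
      (h : D i / U ≤ 2 / s.card) : D i ≤ U * (2 / s.card) := by
    have hDU : D i ≤ U := (Finset.single_le_sum hD hi).trans hU
    rcases ((hD i hi).trans hDU).eq_or_lt with rfl | hU₀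
    · simpa using hDU
    · exact (div_le_iff₀' hU₀).1 h
  exact ⟨i, hi, bound hA hV (by linarith [div_nonneg (hB i hi) hW₀]),
    bound hB hW (by linarith [div_nonneg (hA i hi) hV₀])⟩

/-- A bound, by Markov's inequality, for at least half of any `k + 1` successive increments of `f`
on `[u;v]`. -/
noncomputable def typicalIncrement (f : ℝ → ℝ) (p u v : ℝ) (k : ℕ) : ℝ :=
  min (oscNorm f u v) (pVarNorm f p u v * (2 / (k + 1)) ^ (1 / p))

lemma typicalIncrement_nonneg : 0 ≤ typicalIncrement f p u v k :=
  le_min oscNorm_nonneg (mul_nonneg pVarNorm_nonneg (by positivity))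

lemma typicalIncrement_zero (hp : 0 < p) (hf : pVar f p u v ≠ ⊤) :
    typicalIncrement f p u v 0 = oscNorm f u v := by
  refine min_eq_left ((oscNorm_le_pVarNorm hp hf).trans (le_mul_of_one_le_right pVarNorm_nonneg ?_))
  simpa using Real.one_le_rpow one_le_two (inv_nonneg.2 hp.le)

lemma abs_sub_le_typicalIncrement (hp : 0 < p) (hf : pVar f p u v ≠ ⊤) {y z : ℝ}
    (hy : y ∈ Icc u v) (hz : z ∈ Icc u v)
    (h : |f y - f z| ^ p ≤ pVarNorm f p u v ^ p * (2 / (k + 1 : ℕ))) :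
    |f y - f z| ≤ typicalIncrement f p u v k := by
  refine le_min (abs_sub_le_oscNorm hp hf hy hz) ?_
  rw [← Real.rpow_le_rpow_iff (abs_nonneg _) (mul_nonneg pVarNorm_nonneg (by positivity)) hp,
    Real.mul_rpow pVarNorm_nonneg (by positivity), one_div,
    Real.rpow_inv_rpow (by positivity) hp.ne']
  exact_mod_cast h

lemma exists_abs_sub_mul_abs_sub_le (hp : 0 < p) (hq : 0 < q) (hf : pVar f p u v ≠ ⊤)
    (hg : pVar g q u v ≠ ⊤) (hx : Monotone x) (hu : x 0 = u) (hv : x (k + 2) = v) :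
    ∃ i ≤ k, |f (x (i + 1)) - f (x i)| * |g (x (i + 2)) - g (x (i + 1))| ≤
      typicalIncrement f p u v k * typicalIncrement g q u v k := by
  have mem {i : ℕ} (hi : i ≤ k + 2) : x i ∈ Icc u v :=
    ⟨hu.symm.trans_le (hx i.zero_le), (hx hi).trans_eq hv⟩
  obtain ⟨i, hi, hif, hig⟩ := exists_le_and_le_of_sum_le Finset.nonempty_range_add_one
    (fun _ _ ↦ by positivity) (fun _ _ ↦ by positivity)
    (sum_abs_sub_rpow_le (n := k + 1) hp hx hu.ge (mem (by lia)).2 hf)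
    (sum_abs_sub_rpow_le (x := fun i ↦ x (i + 1)) (n := k + 1) hq
      (fun _ _ h ↦ hx (Nat.succ_le_succ h)) (mem (by lia)).1 (mem le_rfl).2 hg)
  rw [Finset.card_range] at hif hig
  rw [Finset.mem_range] at hi
  exact ⟨i, by lia, mul_le_mul
    (abs_sub_le_typicalIncrement hp hf (mem (by lia)) (mem (by lia)) hif)
    (abs_sub_le_typicalIncrement hq hg (mem (by lia)) (mem (by lia)) hig)
    (abs_nonneg _) typicalIncrement_nonneg⟩

lemma abs_leftSum_sub_le (hp : 0 < p) (hq : 0 < q) (hf : pVar f p u v ≠ ⊤)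
    (hg : pVar g q u v ≠ ⊤) (hx : Monotone x) (hu : x 0 = u) (hv : x n = v) (hξ : ξ ∈ Icc u v) :
    |leftSum f g x n - f ξ * (g v - g u)| ≤
      2 * ∑ k ∈ Finset.range n, typicalIncrement f p u v k * typicalIncrement g q u v k := by
  rcases n with _ | n
  · simp [leftSum, ← hu, ← hv]
  have left_tag := abs_leftSum_sub_le_sum
    (fun _ _ ↦ exists_abs_sub_mul_abs_sub_le hp hq hf hg) hx hu hv
  have change_tag : |(f u - f ξ) * (g v - g u)| ≤
      typicalIncrement f p u v 0 * typicalIncrement g q u v 0 := by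
    have huv : u ≤ v := hξ.1.trans hξ.2
    rw [typicalIncrement_zero hp hf, typicalIncrement_zero hq hg, abs_mul]
    exact mul_le_mul (abs_sub_le_oscNorm hp hf (left_mem_Icc.2 huv) hξ)
      (abs_sub_le_oscNorm hq hg (right_mem_Icc.2 huv) (left_mem_Icc.2 huv)) (abs_nonneg _)
      oscNorm_nonneg
  have nonneg (k : ℕ) : 0 ≤ typicalIncrement f p u v k * typicalIncrement g q u v k :=
    mul_nonneg typicalIncrement_nonneg typicalIncrement_nonneg
  calc |leftSum f g x (n + 1) - f ξ * (g v - g u)|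
      = |(leftSum f g x (n + 1) - f u * (g v - g u)) + (f u - f ξ) * (g v - g u)| := by ring_nf
    _ ≤ _ := (abs_add_le _ _).trans (add_le_add left_tag change_tag)
    _ ≤ _ := by
      rw [two_mul]
      exact add_le_add
        (Finset.sum_le_sum_of_subset_of_nonneg (Finset.range_mono n.le_succ) fun k _ _ ↦ nonneg k)
        (Finset.single_le_sum (fun k _ ↦ nonneg k) (Finset.mem_range.2 n.succ_pos))

end DiscreteYoungLoeve

section LoeveYoungBound

variable {f g : ℝ → ℝ} {p q u v : ℝ}

/-- The Loève–Young bound in which part of the `p`-variation norm of `f` is traded for its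
oscillation; up to the constant, it is one of the two arguments of the minimum in
`improved_loeve_young_min`. -/
noncomputable def loeveYoungBound (p q : ℝ) (f g : ℝ → ℝ) (u v : ℝ) : ℝ :=
  oscNorm f u v ^ (1 + p / q - p) * pVarNorm f p u v ^ (p - p / q) * pVarNorm g q u v

lemma loeveYoungBound_nonneg : 0 ≤ loeveYoungBound p q f g u v :=
  mul_nonneg (mul_nonneg (Real.rpow_nonneg oscNorm_nonneg _) (Real.rpow_nonneg pVarNorm_nonneg _))
    pVarNorm_nonneg

lemma one_add_div_sub_pos (hp : 0 < p) (hpq : 1 < 1 / p + 1 / q) : 0 < 1 + p / q - p := by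
  have : 1 + p / q - p = p * (1 / p + 1 / q - 1) := by field_simp
  rw [this]
  exact mul_pos hp (sub_pos.2 hpq)

lemma sub_div_pos_of_one_lt (hp : 0 < p) (hq : 1 < q) : 0 < p - p / q :=
  sub_pos.2 (div_lt_self hp hq)

lemma loeveYoungBound_eq (hp : 0 < p) (hq : 1 < q) :
    loeveYoungBound p q f g u v = pVarNorm f p u v * pVarNorm g q u v *
      (oscNorm f u v ^ (1 + p / q - p) / pVarNorm f p u v ^ (1 + p / q - p)) := by
  have hθ : p - p / q = 1 - (1 + p / q - p) := by ring
  rw [loeveYoungBound, hθ, Real.rpow_sub' pVarNorm_nonneg (hθ ▸ (sub_div_pos_of_one_lt hp hq).ne'),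
    Real.rpow_one]
  ring

lemma loeveYoungBound_le (hp : 0 < p) (hq : 1 < q) (hpq : 1 < 1 / p + 1 / q) {η : ℝ}
    (hη : oscNorm f u v ≤ η) : loeveYoungBound p q f g u v ≤
      η ^ (1 + p / q - p) * ((pVar f p u v).toReal + (pVar g q u v).toReal) := by
  have hV : pVarNorm f p u v ^ (p - p / q) = (pVar f p u v).toReal ^ (1 - 1 / q) := by
    rw [← pVarNorm_rpow hp.ne', ← Real.rpow_mul pVarNorm_nonneg, mul_one_sub, mul_one_div]
  have hq₁ : 0 < 1 - 1 / q := sub_pos.2 ((div_lt_one (by linarith)).2 hq)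
  have young := Real.geom_mean_le_arith_mean2_weighted hq₁.le (by positivity : 0 ≤ 1 / q)
    (pVar f p u v).toReal_nonneg (pVar g q u v).toReal_nonneg (by ring)
  rw [loeveYoungBound, hV, mul_assoc]
  refine mul_le_mul (Real.rpow_le_rpow oscNorm_nonneg hη (one_add_div_sub_pos hp hpq).le)
    (young.trans (add_le_add ?_ ?_)) (mul_nonneg (by positivity) pVarNorm_nonneg)
    (Real.rpow_nonneg (oscNorm_nonneg.trans hη) _)
  · exact mul_le_of_le_one_left ENNReal.toReal_nonneg (sub_le_self 1 (by positivity))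
  · exact mul_le_of_le_one_left ENNReal.toReal_nonneg (by linarith)

/-- The implied constant in the one-sided summation estimate for products of typical increments. -/
noncomputable def summationConst (p q : ℝ) : ℝ :=
  2 * (2 / (1 - 1 / q) + 1 / (1 / q + 1 / p - 1))

lemma summationConst_pos (hq : 1 < q) (hpq : 1 < 1 / p + 1 / q) : 0 < summationConst p q := by
  have : 0 < 1 - 1 / q := sub_pos.2 ((div_lt_one (by linarith)).2 hq)
  have : 0 < 1 / q + 1 / p - 1 := by linarith
  unfold summationConst
  positivity

lemma min_mul_rpow_eq (hp : 0 < p) {D N r s : ℝ} (hD : 0 < D) (hN : 0 ≤ N) (hr : 0 ≤ r)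
    (hs : 0 ≤ s) :
    min D (N * (r / s) ^ (1 / p)) = D * min 1 ((r * (N / D) ^ p / s) ^ (1 / p)) := by
  have : (r * (N / D) ^ p / s) ^ (1 / p) = N / D * (r / s) ^ (1 / p) := by
    rw [mul_comm r, mul_div_assoc, Real.mul_rpow (by positivity) (by positivity), one_div,
      Real.rpow_rpow_inv (by positivity) hp.ne']
  rw [this, mul_min_of_nonneg _ _ hD.le, mul_one, ← mul_assoc, mul_div_cancel₀ _ hD.ne']

lemma sum_min_mul_rpow_le (hp : 0 < p) (hq : 1 < q) (hpq : 1 < 1 / p + 1 / q) {D N : ℝ}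
    (hD : 0 ≤ D) (hDN : D ≤ N) (n : ℕ) :
    ∑ k ∈ Finset.range n, min D (N * (2 / ((k : ℝ) + 1)) ^ (1 / p)) * (2 / ((k : ℝ) + 1)) ^ (1 / q)
      ≤ summationConst p q * (D ^ (1 + p / q - p) * N ^ (p - p / q)) := by
  have hN : 0 ≤ N := hD.trans hDN
  rcases hD.eq_or_lt with rfl | hD
  · rw [Finset.sum_eq_zero fun k _ ↦ by rw [min_eq_left (by positivity), zero_mul]]
    have := summationConst_pos hq hpq
    positivity
  have hND : 1 ≤ N / D := (one_le_div hD).2 hDN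
  -- `N * (2 / (k + 1)) ^ (1 / p)` drops below `D` when `k + 1` exceeds `T`
  set T := 2 * (N / D) ^ p with hTdef
  have hT : 1 ≤ T := by linarith [Real.one_le_rpow hND hp.le]
  have term (k : ℕ) :
      min D (N * (2 / ((k : ℝ) + 1)) ^ (1 / p)) * (2 / ((k : ℝ) + 1)) ^ (1 / q) =
        D * 2 ^ (1 / q) * (((k : ℝ) + 1) ^ (-(1 / q)) * min 1 ((T / (k + 1)) ^ (1 / p))) := by
    have hk : (0 : ℝ) ≤ k + 1 := by positivity
    rw [min_mul_rpow_eq hp hD hN two_pos.le hk, Real.div_rpow two_pos.le hk, Real.rpow_neg hk]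
    ring
  have scale : D * 2 ^ (1 / q) * T ^ (1 - 1 / q) =
      2 * (D ^ (1 + p / q - p) * N ^ (p - p / q)) := by
    have h₂ : (2 : ℝ) ^ (1 / q) * 2 ^ (1 - 1 / q) = 2 := by
      rw [← Real.rpow_add two_pos, add_sub_cancel, Real.rpow_one]
    have hD' : D ^ (1 + p / q - p) = D / D ^ (p - p / q) := by
      rw [← sub_sub_eq_add_sub, Real.rpow_sub hD, Real.rpow_one]
    rw [hTdef, Real.mul_rpow two_pos.le (by positivity), ← Real.rpow_mul (by positivity),
      mul_one_sub, mul_one_div, Real.div_rpow hN hD.le, hD']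
    linear_combination (D * (N ^ (p - p / q) / D ^ (p - p / q))) * h₂
  calc _ = D * 2 ^ (1 / q) * ∑ k ∈ Finset.range n,
          ((k : ℝ) + 1) ^ (-(1 / q)) * min 1 ((T / (k + 1)) ^ (1 / p)) := by
        rw [Finset.mul_sum, Finset.sum_congr rfl fun k _ ↦ term k]
    _ ≤ D * 2 ^ (1 / q) * ((2 / (1 - 1 / q) + 1 / (1 / q + 1 / p - 1)) * T ^ (1 - 1 / q)) := by
        gcongr
        exact sum_rpow_neg_mul_min_le (by positivity) ((div_lt_one (by linarith)).2 hq)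
          (by linarith) hT n
    _ = summationConst p q * (D ^ (1 + p / q - p) * N ^ (p - p / q)) := by
        rw [summationConst]
        linear_combination (2 / (1 - 1 / q) + 1 / (1 / q + 1 / p - 1)) * scale

lemma sum_typicalIncrement_mul_le (hp : 0 < p) (hq : 1 < q) (hpq : 1 < 1 / p + 1 / q)
    (hf : pVar f p u v ≠ ⊤) (n : ℕ) :
    ∑ k ∈ Finset.range n, typicalIncrement f p u v k * typicalIncrement g q u v k ≤
      summationConst p q * loeveYoungBound p q f g u v := by
  calc ∑ k ∈ Finset.range n, typicalIncrement f p u v k * typicalIncrement g q u v k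
      ≤ ∑ k ∈ Finset.range n,
          typicalIncrement f p u v k * (pVarNorm g q u v * (2 / (k + 1)) ^ (1 / q)) :=
        Finset.sum_le_sum fun k _ ↦
          mul_le_mul_of_nonneg_left (min_le_right _ _) typicalIncrement_nonneg
    _ = pVarNorm g q u v *
          ∑ k ∈ Finset.range n, typicalIncrement f p u v k * (2 / (k + 1)) ^ (1 / q) := by
        simp only [Finset.mul_sum, mul_left_comm]
    _ ≤ pVarNorm g q u v * (summationConst p q *
          (oscNorm f u v ^ (1 + p / q - p) * pVarNorm f p u v ^ (p - p / q))) :=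
        mul_le_mul_of_nonneg_left
          (sum_min_mul_rpow_le hp hq hpq oscNorm_nonneg (oscNorm_le_pVarNorm hp hf) n)
          pVarNorm_nonneg
    _ = summationConst p q * loeveYoungBound p q f g u v := by rw [loeveYoungBound]; ring

lemma abs_leftSum_sub_le_min (hp : 1 < p) (hq : 1 < q) (hpq : 1 < 1 / p + 1 / q)
    (hf : pVar f p u v ≠ ⊤) (hg : pVar g q u v ≠ ⊤) {x : ℕ → ℝ} {n : ℕ} (hx : Monotone x)
    (hu : x 0 = u) (hv : x n = v) {ξ : ℝ} (hξ : ξ ∈ Icc u v) :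
    |leftSum f g x n - f ξ * (g v - g u)| ≤
      2 * max (summationConst p q) (summationConst q p) *
        min (loeveYoungBound p q f g u v) (loeveYoungBound q p g f u v) := by
  have hp₀ : 0 < p := one_pos.trans hp
  have hq₀ : 0 < q := one_pos.trans hq
  refine (abs_leftSum_sub_le hp₀ hq₀ hf hg hx hu hv hξ).trans ?_
  rw [mul_assoc, mul_min_of_nonneg _ _ (le_max_of_le_left (summationConst_pos hq hpq).le)]
  gcongr
  refine le_min ?_ ?_
  · exact (sum_typicalIncrement_mul_le hp₀ hq hpq hf n).trans
      (mul_le_mul_of_nonneg_right (le_max_left _ _) loeveYoungBound_nonneg)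
  · simp only [mul_comm (typicalIncrement f p u v _)]
    exact (sum_typicalIncrement_mul_le hq₀ hp (by rwa [add_comm]) hg n).trans
      (mul_le_mul_of_nonneg_right (le_max_right _ _) loeveYoungBound_nonneg)

end LoeveYoungBound

section RiemannStieltjes

variable {f g : ℝ → ℝ} {p q a b : ℝ}

lemma exists_monotone_range_eq {α : Type*} [LinearOrder α] {A : Finset α} (hA : A.Nonempty) :
    ∃ t : ℕ → α, Monotone t ∧ Set.range t = A := by
  obtain ⟨m, hm⟩ := Nat.exists_eq_succ_of_ne_zero hA.card_ne_zero
  refine ⟨fun i ↦ A.orderEmbOfFin hm ⟨min i m, by lia⟩, fun i j hij ↦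
    (A.orderEmbOfFin hm).monotone (Fin.mk_le_mk.2 (min_le_min_right m hij)), ?_⟩
  rw [← Finset.range_orderEmbOfFin A hm]
  refine Subset.antisymm (range_subset_iff.2 fun i ↦ mem_range_self _)
    (range_subset_iff.2 fun i ↦ ⟨i, ?_⟩)
  simp only [min_eq_left (Nat.lt_succ_iff.1 i.2), Fin.eta]

lemma exists_leftSum_eq_sub (f g : ℝ → ℝ) (A : Finset ℝ) :
    ∃ J : ℝ → ℝ, ∀ u ∈ A, ∀ v ∈ A, u ≤ v → ∃ (x : ℕ → ℝ) (n : ℕ),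
      Monotone x ∧ x 0 = u ∧ x n = v ∧ leftSum f g x n = J v - J u := by
  rcases A.eq_empty_or_nonempty with rfl | hA
  · exact ⟨0, by simp⟩
  obtain ⟨t, ht, htA⟩ := exists_monotone_range_eq hA
  have index (v : ℝ) (hv : v ∈ A) : ∃ i, t i = v := htA.ge hv
  choose! idx h_idx using index
  refine ⟨fun v ↦ leftSum f g t (idx v), fun u hu v hv huv ↦ ?_⟩
  rcases le_total (idx u) (idx v) with h | h
  · obtain ⟨n, hn⟩ := Nat.exists_eq_add_of_le h
    refine ⟨fun i ↦ t (idx u + i), n, fun i j hij ↦ ht (by lia), h_idx u hu, ?_, ?_⟩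
    · simpa only [hn] using h_idx v hv
    · simp only [leftSum, hn, Finset.sum_range_add, add_sub_cancel_left, add_assoc]
  · obtain rfl : u = v := huv.antisymm (by simpa only [h_idx _ hu, h_idx _ hv] using ht h)
    exact ⟨fun _ ↦ u, 0, monotone_const, rfl, rfl, by simp [leftSum]⟩

-- The indefinite integral is a limit, along an ultrafilter of finite sets of points, of left sums.
lemma exists_indefinite_integral {K : ℝ → ℝ → ℝ}
    (hK : ∀ u v, a ≤ u → v ≤ b → ∀ (x : ℕ → ℝ) (n : ℕ), Monotone x → x 0 = u → x n = v →
      ∀ ξ ∈ Icc u v, |leftSum f g x n - f ξ * (g v - g u)| ≤ K u v) :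
    ∃ J : ℝ → ℝ, ∀ u v, a ≤ u → u ≤ v → v ≤ b → ∀ ξ ∈ Icc u v,
      |J v - J u - f ξ * (g v - g u)| ≤ K u v := by
  choose J hJ using exists_leftSum_eq_sub f g
  let U : Ultrafilter (Finset ℝ) := Ultrafilter.of atTop
  have eventually_mem (v : ℝ) : ∀ᶠ A in (U : Filter (Finset ℝ)), v ∈ A :=
    (Ultrafilter.of_le atTop) ((eventually_ge_atTop {v}).mono fun _ ↦ Finset.singleton_subset_iff.1)
  have approx {u v ξ : ℝ} (hu : a ≤ u) (huv : u ≤ v) (hv : v ≤ b) (hξ : ξ ∈ Icc u v) :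
      ∀ᶠ A in (U : Filter (Finset ℝ)), |J A v - J A u - f ξ * (g v - g u)| ≤ K u v := by
    filter_upwards [eventually_mem u, eventually_mem v] with A huA hvA
    obtain ⟨x, n, hx, hxu, hxv, hsum⟩ := hJ A u huA v hvA huv
    exact hsum ▸ hK u v hu hv x n hx hxu hxv ξ hξ
  have limit (v : ℝ) (hv : v ∈ Icc a b) :
      ∃ l, Tendsto (fun A ↦ J A v - J A a) U (nhds l) := by
    obtain ⟨l, -, hl⟩ := (isCompact_closedBall (f a * (g v - g a)) (K a v)).ultrafilter_le_nhds'
      (U.map fun A ↦ J A v - J A a) (approx le_rfl hv.1 hv.2 (left_mem_Icc.2 hv.1))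
    exact ⟨l, hl⟩
  choose! L hL using limit
  refine ⟨L, fun u v hu huv hv ξ hξ ↦ ?_⟩
  have tendsto_sub : Tendsto (fun A ↦ J A v - J A u) U (nhds (L v - L u)) := by
    simpa using (hL v ⟨hu.trans huv, hv⟩).sub (hL u ⟨hu, huv.trans hv⟩)
  exact le_of_tendsto (tendsto_sub.sub_const _).abs (approx hu huv hv hξ)

lemma RSIntegral.of_forall_abs_sub_sub_le {J φ : ℝ → ℝ}
    (h : ∀ ε > 0, ∃ δ > 0, ∀ u v, a ≤ u → u ≤ v → v ≤ b → v - u < δ → ∀ ξ ∈ Icc u v,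
      |J v - J u - f ξ * (g v - g u)| ≤ ε * (φ v - φ u)) :
    RSIntegral f g a b (J b - J a) := by
  intro ε hε
  set M := |φ b - φ a| + 1
  have hM₀ : 0 < M := by positivity
  obtain ⟨δ, hδ, hJ⟩ := h (ε / M) (div_pos hε hM₀)
  refine ⟨δ, hδ, fun n t ξ ht ha hb hξ hmesh ↦ ?_⟩
  have telescope (F : ℝ → ℝ) :
      ∑ i : Fin n, (F (t i.succ) - F (t i.castSucc)) = F b - F a := by
    have := (Fin.sum_univ_succ fun i ↦ F (t i)).symm.trans (Fin.sum_univ_castSucc fun i ↦ F (t i))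
    rw [Finset.sum_sub_distrib, ← ha, ← hb]
    linarith
  have cell (i : Fin n) :
      |f (ξ i) * (g (t i.succ) - g (t i.castSucc)) - (J (t i.succ) - J (t i.castSucc))| ≤
        ε / M * (φ (t i.succ) - φ (t i.castSucc)) := by
    rw [abs_sub_comm]
    exact hJ _ _ (ha.symm.trans_le (ht.monotone (Fin.zero_le _)))
      (ht.monotone Fin.castSucc_lt_succ.le) ((ht.monotone (Fin.le_last _)).trans_eq hb)
      (hmesh i) _ (hξ i)
  calc |∑ i : Fin n, f (ξ i) * (g (t i.succ) - g (t i.castSucc)) - (J b - J a)|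
      ≤ ∑ i : Fin n, ε / M * (φ (t i.succ) - φ (t i.castSucc)) := by
        rw [← telescope J, ← Finset.sum_sub_distrib]
        exact (Finset.abs_sum_le_sum_abs _ _).trans (Finset.sum_le_sum fun i _ ↦ cell i)
    _ = ε / M * (φ b - φ a) := by rw [← Finset.mul_sum, telescope]
    _ < ε / M * M := by
        gcongr
        exact (le_abs_self _).trans_lt (lt_add_one _)
    _ = ε := div_mul_cancel₀ ε hM₀.ne'

lemma exists_mem_nhdsWithin_forall_dist_le {X Y : Type*} [TopologicalSpace X]
    [PseudoMetricSpace Y] {K : Set X} {f : X → Y} {x : X} (hf : ContinuousWithinAt f K x) {η : ℝ}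
    (hη : 0 < η) : ∃ U ∈ nhdsWithin x K, ∀ y ∈ U, ∀ z ∈ U, dist (f y) (f z) ≤ η :=
  ⟨_, hf (Metric.ball_mem_nhds (f x) (half_pos hη)), fun _ hy _ hz ↦
    ((dist_triangle_right _ _ _).trans_lt (add_lt_add hy hz)).le.trans_eq (add_halves η)⟩

lemma exists_forall_dist_le_or_dist_le {X Y Z : Type*} [PseudoMetricSpace X]
    [PseudoMetricSpace Y] [PseudoMetricSpace Z] {K : Set X} (hK : IsCompact K) {f : X → Y}
    {g : X → Z} (h : ∀ x ∈ K, ContinuousWithinAt f K x ∨ ContinuousWithinAt g K x) {η : ℝ}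
    (hη : 0 < η) :
    ∃ δ > 0, ∀ S ⊆ K, (∀ y ∈ S, ∀ z ∈ S, dist y z < δ) →
      (∀ y ∈ S, ∀ z ∈ S, dist (f y) (f z) ≤ η) ∨ ∀ y ∈ S, ∀ z ∈ S, dist (g y) (g z) ≤ η := by
  have cover (x : X) (hx : x ∈ K) : ∃ U ∈ nhdsWithin x K,
      (∀ y ∈ U, ∀ z ∈ U, dist (f y) (f z) ≤ η) ∨ ∀ y ∈ U, ∀ z ∈ U, dist (g y) (g z) ≤ η := by
    rcases h x hx with hf | hg
    · exact (exists_mem_nhdsWithin_forall_dist_le hf hη).imp fun _ hU ↦ ⟨hU.1, .inl hU.2⟩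
    · exact (exists_mem_nhdsWithin_forall_dist_le hg hη).imp fun _ hU ↦ ⟨hU.1, .inr hU.2⟩
  choose U hU hUη using cover
  obtain ⟨δ, hδ, hball⟩ := Metric.uniformity_basis_dist.lebesgue_number_lemma_nhdsWithin' hK hU
  refine ⟨δ, hδ, fun S hSK hS ↦ ?_⟩
  rcases S.eq_empty_or_nonempty with rfl | ⟨s, hs⟩
  · simp
  obtain ⟨x, hx⟩ := hball s (hSK hs)
  have hSU : S ⊆ U x x.2 := fun y hy ↦ hx ⟨hS s hs y hy, hSK hy⟩
  exact (hUη x x.2).imp (fun H y hy z hz ↦ H y (hSU hy) z (hSU hz))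
    fun H y hy z hz ↦ H y (hSU hy) z (hSU hz)

/-- The sum of the `p`-variation of `f` and the `q`-variation of `g` on `[a;v]`, whose increments
control the error of the integral over short intervals. -/
noncomputable def jointVariation (f g : ℝ → ℝ) (p q a v : ℝ) : ℝ :=
  (pVar f p a v).toReal + (pVar g q a v).toReal

lemma exists_pos_forall_mul_rpow_le {α β M ε : ℝ} (hα : 0 < α) (hβ : 0 < β) (hε : 0 < ε) :
    ∃ η > 0, M * η ^ α ≤ ε ∧ M * η ^ β ≤ ε := by
  have small {γ : ℝ} (hγ : 0 < γ) : ∀ᶠ η in nhdsWithin (0 : ℝ) (Ioi 0), M * η ^ γ ≤ ε := by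
    have : Tendsto (fun η : ℝ ↦ M * η ^ γ) (nhds 0) (nhds 0) := by
      simpa [Real.zero_rpow hγ.ne'] using
        ((Real.continuousAt_rpow_const 0 γ (.inr hγ.le)).const_mul M).tendsto
    exact nhdsWithin_le_nhds (this.eventually_le_const hε)
  obtain ⟨η, ⟨hηα, hηβ⟩, hη⟩ := (((small hα).and (small hβ)).and self_mem_nhdsWithin).exists
  exact ⟨η, hη, hηα, hηβ⟩

lemma NoCommonDiscont.exists_min_loeveYoungBound_le (hfg : NoCommonDiscont f g a b) (hp : 1 < p)
    (hq : 1 < q) (hpq : 1 < 1 / p + 1 / q) (hf : pVar f p a b ≠ ⊤) (hg : pVar g q a b ≠ ⊤)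
    {M ε : ℝ} (hM : 0 ≤ M) (hε : 0 < ε) :
    ∃ δ > 0, ∀ u v, a ≤ u → u ≤ v → v ≤ b → v - u < δ →
      M * min (loeveYoungBound p q f g u v) (loeveYoungBound q p g f u v) ≤
        ε * (jointVariation f g p q a v - jointVariation f g p q a u) := by
  have hp₀ : 0 < p := one_pos.trans hp
  have hq₀ : 0 < q := one_pos.trans hq
  have hqp : 1 < 1 / q + 1 / p := by rwa [add_comm]
  obtain ⟨η, hη, hηp, hηq⟩ := exists_pos_forall_mul_rpow_le (M := M)
    (one_add_div_sub_pos hp₀ hpq) (one_add_div_sub_pos hq₀ hqp) hε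
  obtain ⟨δ, hδ, hosc⟩ := exists_forall_dist_le_or_dist_le isCompact_Icc hfg hη
  refine ⟨δ, hδ, fun u v hau huv hvb huvδ ↦ ?_⟩
  have superadditive : (pVar f p u v).toReal + (pVar g q u v).toReal ≤
      jointVariation f g p q a v - jointVariation f g p q a u := by
    unfold jointVariation
    linarith [toReal_pVar_le_sub hp₀ hau huv hvb hf, toReal_pVar_le_sub hq₀ hau huv hvb hg]
  refine le_trans ?_ (mul_le_mul_of_nonneg_left superadditive hε.le)
  rcases hosc (Icc u v) (Icc_subset_Icc hau hvb) (fun y hy z hz ↦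
    (Real.dist_le_of_mem_Icc hy hz).trans_lt huvδ) with hosc | hosc
  · calc _ ≤ M * loeveYoungBound p q f g u v := by gcongr; exact min_le_left _ _
      _ ≤ M * (η ^ (1 + p / q - p) * ((pVar f p u v).toReal + (pVar g q u v).toReal)) := by
        gcongr; exact loeveYoungBound_le hp₀ hq hpq (oscNorm_le hη.le hosc)
      _ ≤ _ := by rw [← mul_assoc]; gcongr
  · calc _ ≤ M * loeveYoungBound q p g f u v := by gcongr; exact min_le_right _ _
      _ ≤ M * (η ^ (1 + q / p - q) * ((pVar g q u v).toReal + (pVar f p u v).toReal)) := by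
        gcongr; exact loeveYoungBound_le hq₀ hp hqp (oscNorm_le hη.le hosc)
      _ ≤ _ := by rw [← mul_assoc, add_comm (pVar g q u v).toReal]; gcongr

end RiemannStieltjes

/-- Remark 4 (second part): estimate with an arbitrary evaluation point `ξ ∈ [a;b]`. -/
theorem improved_loeve_young_min
    (p q : ℝ) (hp : 1 < p) (hq : 1 < q) (hpq : 1 / p + 1 / q > 1) :
    ∃ C : ℝ, 0 < C ∧ ∀ (a b : ℝ), a < b → ∀ f g : ℝ → ℝ,
      NoCommonDiscont f g a b → pVar f p a b < ⊤ → pVar g q a b < ⊤ →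
      ∀ ξ ∈ Set.Icc a b,
        ∃ I : ℝ, RSIntegral f g a b I ∧
          |I - f ξ * (g b - g a)| ≤
            2 * C * pVarNorm f p a b * pVarNorm g q a b *
              min (oscNorm f a b ^ (1 + p / q - p) / pVarNorm f p a b ^ (1 + p / q - p))
                (oscNorm g a b ^ (1 + q / p - q) / pVarNorm g q a b ^ (1 + q / p - q)) := by
  set C := max (summationConst p q) (summationConst q p)
  have hC : 0 < C := lt_max_of_lt_left (summationConst_pos hq hpq)
  refine ⟨C, hC, fun a b hab f g hfg hf hg ξ hξ ↦ ?_⟩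
  obtain ⟨J, hJ⟩ := exists_indefinite_integral fun u v hu hv x n hx hxu hxv ξ hξ ↦
    abs_leftSum_sub_le_min hp hq hpq (ne_top_of_le_ne_top hf.ne (pVar_mono hu hv))
      (ne_top_of_le_ne_top hg.ne (pVar_mono hu hv)) hx hxu hxv hξ
  refine ⟨J b - J a, .of_forall_abs_sub_sub_le (φ := jointVariation f g p q a) fun ε hε ↦ ?_, ?_⟩
  · obtain ⟨δ, hδ, hsmall⟩ := hfg.exists_min_loeveYoungBound_le hp hq hpq hf.ne hg.ne
      (mul_pos two_pos hC).le hε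
    exact ⟨δ, hδ, fun u v hu huv hv huvδ ξ hξ ↦
      (hJ u v hu huv hv ξ hξ).trans (hsmall u v hu huv hv huvδ)⟩
  · refine (hJ a b le_rfl hab.le le_rfl ξ hξ).trans_eq ?_
    rw [loeveYoungBound_eq (one_pos.trans hp) hq, loeveYoungBound_eq (one_pos.trans hq) hp,
      mul_comm (pVarNorm g q a b) (pVarNorm f p a b),
      ← mul_min_of_nonneg _ _ (mul_nonneg pVarNorm_nonneg pVarNorm_nonneg)]
    ring
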